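/- The function Ψ₁₀(τ) = Π_δ θ[δ](τ)², the product over the ten even characteristics δ of the squares of the theta constants, is a Siegel modular form of weight 10 for Sp(4,ℤ): for every matrix M = (A B; C D) ∈ Sp(4,ℤ) (written in 2×2 blocks) and every τ ∈ H₂, the matrix Cτ+D is invertible, (Aτ+B)(Cτ+D)⁻¹ ∈ H₂, and Ψ₁₀((Aτ+B)(Cτ+D)⁻¹) = det(Cτ+D)¹⁰ · Ψ₁₀(τ). -/

import Mathlib

open scoped BigOperators

namespace TwoLoop

/-- 2×2 complex matrices. -/
abbrev Mat2 := Matrix (Fin 2) (Fin 2) ℂ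

/-- The genus-2 Siegel upper half space: symmetric 2×2 complex matrices with
positive definite imaginary part. -/
def SiegelH2 : Set Mat2 := {τ | τ.transpose = τ ∧ (τ.map Complex.im).PosDef}

/-- A (half-integer) theta characteristic `[a;b]`, recorded by its rows `a, b ∈ {0,1}²`. -/
abbrev Char := (Fin 2 → ℤ) × (Fin 2 → ℤ)

/-- The theta constant `θ[a;b](τ) = Σ_{n ∈ ℤ²} exp(πi (n+a/2)ᵀ τ (n+a/2) + πi (n+a/2)·b)`. -/
noncomputable def theta (κ : Char) (τ : Mat2) : ℂ :=
  ∑' n : Fin 2 → ℤ,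
    Complex.exp ((Real.pi : ℂ) * Complex.I *
      ((∑ i, ∑ j, ((n i : ℂ) + (κ.1 i : ℂ) / 2) * τ i j * ((n j : ℂ) + (κ.1 j : ℂ) / 2))
        + ∑ i, ((n i : ℂ) + (κ.1 i : ℂ) / 2) * (κ.2 i : ℂ)))

/-- The ten even characteristics δ₁,…,δ₁₀. -/
def δev : Fin 10 → Char :=
  ![(![0,0], ![0,0]), (![0,0], ![0,1]), (![0,0], ![1,0]), (![0,0], ![1,1]),
    (![0,1], ![0,0]), (![0,1], ![1,0]), (![1,0], ![0,0]), (![1,0], ![0,1]),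
    (![1,1], ![0,0]), (![1,1], ![1,1])]

/-- The six odd characteristics ν₁,…,ν₆. -/
def νodd : Fin 6 → Char :=
  ![(![0,1], ![0,1]), (![1,0], ![1,0]), (![0,1], ![1,1]),
    (![1,0], ![1,1]), (![1,1], ![0,1]), (![1,1], ![1,0])]

/-- `Θ[ε](τ) = θ[ε;0](2τ)`. -/
noncomputable def Θf (ε : Fin 2 → ℤ) (τ : Mat2) : ℂ := theta (ε, ![0,0]) ((2 : ℂ) • τ)

noncomputable def P0 (τ : Mat2) : ℂ :=
  Θf ![0,0] τ ^ 4 + Θf ![0,1] τ ^ 4 + Θf ![1,0] τ ^ 4 + Θf ![1,1] τ ^ 4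
noncomputable def P1 (τ : Mat2) : ℂ :=
  2 * (Θf ![0,0] τ ^ 2 * Θf ![0,1] τ ^ 2 + Θf ![1,0] τ ^ 2 * Θf ![1,1] τ ^ 2)
noncomputable def P2 (τ : Mat2) : ℂ :=
  2 * (Θf ![0,0] τ ^ 2 * Θf ![1,0] τ ^ 2 + Θf ![0,1] τ ^ 2 * Θf ![1,1] τ ^ 2)
noncomputable def P3 (τ : Mat2) : ℂ :=
  2 * (Θf ![0,0] τ ^ 2 * Θf ![1,1] τ ^ 2 + Θf ![0,1] τ ^ 2 * Θf ![1,0] τ ^ 2)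
noncomputable def P4 (τ : Mat2) : ℂ :=
  4 * (Θf ![0,0] τ * Θf ![0,1] τ * Θf ![1,0] τ * Θf ![1,1] τ)

/-- The vector `(P₀,…,P₄)`. -/
noncomputable def Pv : Fin 5 → Mat2 → ℂ := ![P0, P1, P2, P3, P4]

open MvPolynomial in
/-- The Igusa quartic as a polynomial in `x₀,…,x₄`. -/
noncomputable def I4poly : MvPolynomial (Fin 5) ℂ :=
  X 4 ^ 4 + X 4 ^ 2 * X 0 ^ 2 - X 4 ^ 2 * X 1 ^ 2 - X 4 ^ 2 * X 2 ^ 2 - X 4 ^ 2 * X 3 ^ 2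
    + X 1 ^ 2 * X 2 ^ 2 + X 1 ^ 2 * X 3 ^ 2 + X 2 ^ 2 * X 3 ^ 2
    - 2 * (X 0 * X 1 * X 2 * X 3)

/-- The signature `⟨κ|λ⟩ = exp(πi(a_κ·b_λ − b_κ·a_λ))`. -/
noncomputable def sig (κ lam : Char) : ℂ :=
  Complex.exp ((Real.pi : ℂ) * Complex.I *
    (((∑ i, κ.1 i * lam.2 i : ℤ) : ℂ) - ((∑ i, κ.2 i * lam.1 i : ℤ) : ℂ)))

/-- Componentwise mod-2 sum of characteristics. -/
def addChar (κ lam : Char) : Char :=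
  (fun i => (κ.1 i + lam.1 i) % 2, fun i => (κ.2 i + lam.2 i) % 2)

/-- For each even characteristic `δ_d`, the ordering `(k₁,…,k₆)` of `{1,…,6}` (0-indexed) whose
first three entries form the triad of odd characteristics with `δ_d = ν_{k₁}+ν_{k₂}+ν_{k₃}`
and whose last three are the complementary indices. -/
def triad : Fin 10 → Fin 6 → Fin 6 :=
  ![![0,3,5,1,2,4], ![0,1,5,2,3,4], ![0,1,4,2,3,5], ![0,3,4,1,2,5], ![0,1,3,2,4,5],
    ![0,4,5,1,2,3], ![0,1,2,3,4,5], ![0,2,3,1,4,5], ![0,2,5,1,3,4], ![0,2,4,1,3,5]]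

/-- D'Hoker–Phong's `Ξ₆[δ]`. -/
noncomputable def Xi6 (d : Fin 10) (τ : Mat2) : ℂ :=
  ∑ i : Fin 3, ∑ j : Fin 3,
    if i < j then
      sig (νodd (triad d (Fin.castLE (by norm_num) i))) (νodd (triad d (Fin.castLE (by norm_num) j))) *
        ∏ m : Fin 3,
          theta (addChar (addChar (νodd (triad d (Fin.castLE (by norm_num) i)))
              (νodd (triad d (Fin.castLE (by norm_num) j))))
            (νodd (triad d (⟨m.1 + 3, by omega⟩ : Fin 6)))) τ ^ 4
    else 0

/-- The formal derivative `∂I₄/∂θ⁴[δ]` of the Igusa quartic with respect to the ten fourth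
powers of the even theta constants, regarded as independent variables. -/
noncomputable def Dd (d : Fin 10) (τ : Mat2) : ℂ :=
  (1 / 48 : ℂ) *
    (theta (δev d) τ ^ 4 * (∑ d' : Fin 10, theta (δev d') τ ^ 8) - 4 * theta (δev d) τ ^ 12)

/-- `f_δ = 2Ξ₆[δ] − ∂I₄/∂θ⁴[δ]`. -/
noncomputable def fδ (d : Fin 10) (τ : Mat2) : ℂ := 2 * Xi6 d τ - Dd d τ

/-- `Ψ₆`, the weight-6 modular form. -/
noncomputable def Ψ6 (τ : Mat2) : ℂ :=
  P0 τ ^ 3 - 9 * P0 τ * (P1 τ ^ 2 + P2 τ ^ 2 + P3 τ ^ 2 - 4 * P4 τ ^ 2)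
    + 54 * (P1 τ * P2 τ * P3 τ)

/-- `Ψ₁₀`, the weight-10 modular form. -/
noncomputable def Ψ10 (τ : Mat2) : ℂ := ∏ d : Fin 10, theta (δev d) τ ^ 2

/-- A characteristic is even when `a·b` is even. -/
def IsEvenChar (κ : Char) : Prop := (∑ i, κ.1 i * κ.2 i) % 2 = 0

/-- A characteristic is odd when `a·b` is odd. -/
def IsOddChar (κ : Char) : Prop := (∑ i, κ.1 i * κ.2 i) % 2 = 1

/-- The symplectic form `J = (0 I; −I 0)`. -/
def Jmat : Matrix (Fin 4) (Fin 4) ℤ := !![0,0,1,0; 0,0,0,1; -1,0,0,0; 0,-1,0,0]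

/-- The symplectic group `Sp(4,ℤ)`. -/
def Sp4Z : Set (Matrix (Fin 4) (Fin 4) ℤ) := {M | M.transpose * Jmat * M = Jmat}

/-- Upper-left 2×2 block `A` of a 4×4 integer matrix, as a complex matrix. -/
def blkA (M : Matrix (Fin 4) (Fin 4) ℤ) : Mat2 :=
  fun i j => ((M (⟨i.1, by omega⟩ : Fin 4) (⟨j.1, by omega⟩ : Fin 4) : ℤ) : ℂ)

/-- Upper-right 2×2 block `B`. -/
def blkB (M : Matrix (Fin 4) (Fin 4) ℤ) : Mat2 :=
  fun i j => ((M (⟨i.1, by omega⟩ : Fin 4) (⟨j.1 + 2, by omega⟩ : Fin 4) : ℤ) : ℂ)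

/-- Lower-left 2×2 block `C`. -/
def blkC (M : Matrix (Fin 4) (Fin 4) ℤ) : Mat2 :=
  fun i j => ((M (⟨i.1 + 2, by omega⟩ : Fin 4) (⟨j.1, by omega⟩ : Fin 4) : ℤ) : ℂ)

/-- Lower-right 2×2 block `D`. -/
def blkD (M : Matrix (Fin 4) (Fin 4) ℤ) : Mat2 :=
  fun i j => ((M (⟨i.1 + 2, by omega⟩ : Fin 4) (⟨j.1 + 2, by omega⟩ : Fin 4) : ℤ) : ℂ)

section
open Matrix
open scoped ComplexOrder

theorem posDef_ofReal {Y : Matrix (Fin 2) (Fin 2) ℝ} (h : Y.PosDef) :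
    (Y.map (fun x : ℝ => (x : ℂ))).PosDef := by
  have hs : Y 1 0 = Y 0 1 := by
    have := h.isHermitian.apply 0 1
    simpa using this
  refine PosDef.of_dotProduct_mulVec_pos ?_ ?_
  · ext i j
    have := h.isHermitian.apply i j
    simp at this
    simp [this]
  · intro v hv
    have key : star v ⬝ᵥ (Y.map (fun x : ℝ => (x : ℂ))) *ᵥ v =
        (((fun i => (v i).re) ⬝ᵥ Y *ᵥ (fun i => (v i).re)
          + (fun i => (v i).im) ⬝ᵥ Y *ᵥ (fun i => (v i).im) : ℝ) : ℂ) := by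
      apply Complex.ext
      · simp [dotProduct, mulVec, Fin.sum_univ_two, hs]; ring
      · simp [dotProduct, mulVec, Fin.sum_univ_two, hs]; ring
    rw [key]
    have hp : ∀ x : Fin 2 → ℝ, 0 ≤ x ⬝ᵥ Y *ᵥ x := fun x => by
      simpa using h.posSemidef.dotProduct_mulVec_nonneg x
    have hp' : ∀ x : Fin 2 → ℝ, x ≠ 0 → 0 < x ⬝ᵥ Y *ᵥ x := fun x hx => by
      simpa using h.dotProduct_mulVec_pos hx
    have : 0 < (fun i => (v i).re) ⬝ᵥ Y *ᵥ (fun i => (v i).re)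
          + (fun i => (v i).im) ⬝ᵥ Y *ᵥ (fun i => (v i).im) := by
      by_cases h1 : (fun i => (v i).re) = 0
      · have h2 : (fun i => (v i).im) ≠ 0 := by
          intro h2
          apply hv
          ext i
          exact Complex.ext (congrFun h1 i) (congrFun h2 i)
        exact add_pos_of_nonneg_of_pos (hp _) (hp' _ h2)
      · exact add_pos_of_pos_of_nonneg (hp' _ h1) (hp _)
    exact_mod_cast this

theorem posDef_of_ofReal {Y : Matrix (Fin 2) (Fin 2) ℝ}
    (h : (Y.map (fun x : ℝ => (x : ℂ))).PosDef) : Y.PosDef := by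
  refine PosDef.of_dotProduct_mulVec_pos ?_ ?_
  · ext i j
    have := h.isHermitian.apply i j
    simp at this
    simp [this]
  · intro v hv
    have h2 : (fun i => (v i : ℂ)) ≠ 0 := by
      intro h2
      apply hv
      ext i
      simpa using congrFun h2 i
    have := h.dotProduct_mulVec_pos h2
    have key : star (fun i => (v i : ℂ)) ⬝ᵥ (Y.map (fun x : ℝ => (x : ℂ))) *ᵥ (fun i => (v i : ℂ)) =
        ((star v ⬝ᵥ Y *ᵥ v : ℝ) : ℂ) := by
      simp [dotProduct, mulVec, Fin.sum_univ_two]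
    rw [key] at this
    exact_mod_cast this

theorem sub_conjTranspose {τ : Mat2} (h : τᵀ = τ) :
    τ - τᴴ = (2 * Complex.I) • ((τ.map Complex.im).map (fun x : ℝ => (x : ℂ))) := by
  ext i j
  have hij : τ j i = τ i j := by conv_rhs => rw [← h, transpose_apply]
  apply Complex.ext <;> simp [hij]
  ring

theorem blkA_mul (M N : Matrix (Fin 4) (Fin 4) ℤ) :
    blkA (M * N) = blkA M * blkA N + blkB M * blkC N := by
  ext i j
  fin_cases i <;> fin_cases j <;>
    simp [blkA, blkB, blkC, Matrix.mul_apply, Fin.sum_univ_four, Fin.sum_univ_two] <;> ring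
theorem blkB_mul (M N : Matrix (Fin 4) (Fin 4) ℤ) :
    blkB (M * N) = blkA M * blkB N + blkB M * blkD N := by
  ext i j
  fin_cases i <;> fin_cases j <;>
    simp [blkA, blkB, blkD, Matrix.mul_apply, Fin.sum_univ_four, Fin.sum_univ_two] <;> ring
theorem blkC_mul (M N : Matrix (Fin 4) (Fin 4) ℤ) :
    blkC (M * N) = blkC M * blkA N + blkD M * blkC N := by
  ext i j
  fin_cases i <;> fin_cases j <;>
    simp [blkA, blkD, blkC, Matrix.mul_apply, Fin.sum_univ_four, Fin.sum_univ_two] <;> ring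
theorem blkD_mul (M N : Matrix (Fin 4) (Fin 4) ℤ) :
    blkD (M * N) = blkC M * blkB N + blkD M * blkD N := by
  ext i j
  fin_cases i <;> fin_cases j <;>
    simp [blkB, blkD, blkC, Matrix.mul_apply, Fin.sum_univ_four, Fin.sum_univ_two] <;> ring

theorem blkA_tr (M : Matrix (Fin 4) (Fin 4) ℤ) : blkA Mᵀ = (blkA M)ᵀ := rfl
theorem blkB_tr (M : Matrix (Fin 4) (Fin 4) ℤ) : blkB Mᵀ = (blkC M)ᵀ := rfl
theorem blkC_tr (M : Matrix (Fin 4) (Fin 4) ℤ) : blkC Mᵀ = (blkB M)ᵀ := rfl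
theorem blkD_tr (M : Matrix (Fin 4) (Fin 4) ℤ) : blkD Mᵀ = (blkD M)ᵀ := rfl

theorem blkA_J : blkA Jmat = 0 := by
  ext i j; fin_cases i <;> fin_cases j <;> simp [blkA, Jmat]
theorem blkB_J : blkB Jmat = 1 := by
  ext i j; fin_cases i <;> fin_cases j <;> simp [blkB, Jmat]
theorem blkC_J : blkC Jmat = -1 := by
  ext i j; fin_cases i <;> fin_cases j <;> simp [blkC, Jmat]
theorem blkD_J : blkD Jmat = 0 := by
  ext i j; fin_cases i <;> fin_cases j <;> simp [blkD, Jmat]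

theorem blkA_one : blkA 1 = 1 := by
  ext i j; fin_cases i <;> fin_cases j <;> simp [blkA]
theorem blkB_one : blkB 1 = 0 := by
  ext i j; fin_cases i <;> fin_cases j <;> simp [blkB]
theorem blkC_one : blkC 1 = 0 := by
  ext i j; fin_cases i <;> fin_cases j <;> simp [blkC]
theorem blkD_one : blkD 1 = 1 := by
  ext i j; fin_cases i <;> fin_cases j <;> simp [blkD]

theorem blkA_ct (M : Matrix (Fin 4) (Fin 4) ℤ) : (blkA M)ᴴ = (blkA M)ᵀ := by
  ext i j; simp [blkA]
theorem blkB_ct (M : Matrix (Fin 4) (Fin 4) ℤ) : (blkB M)ᴴ = (blkB M)ᵀ := by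
  ext i j; simp [blkB]
theorem blkC_ct (M : Matrix (Fin 4) (Fin 4) ℤ) : (blkC M)ᴴ = (blkC M)ᵀ := by
  ext i j; simp [blkC]
theorem blkD_ct (M : Matrix (Fin 4) (Fin 4) ℤ) : (blkD M)ᴴ = (blkD M)ᵀ := by
  ext i j; simp [blkD]

theorem sp_rel {M : Matrix (Fin 4) (Fin 4) ℤ} (h : M ∈ Sp4Z) :
    (blkA M)ᵀ * blkC M = (blkC M)ᵀ * blkA M ∧ (blkB M)ᵀ * blkD M = (blkD M)ᵀ * blkB M ∧
    (blkA M)ᵀ * blkD M = 1 + (blkC M)ᵀ * blkB M ∧ (blkD M)ᵀ * blkA M = 1 + (blkB M)ᵀ * blkC M := by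
  have h : Mᵀ * Jmat * M = Jmat := h
  have hA := congrArg blkA h
  have hB := congrArg blkB h
  have hC := congrArg blkC h
  have hD := congrArg blkD h
  simp only [blkA_mul, blkB_mul, blkC_mul, blkD_mul, blkA_tr, blkB_tr, blkC_tr, blkD_tr,
    blkA_J, blkB_J, blkC_J, blkD_J] at hA hB hC hD
  simp only [mul_zero, mul_one, mul_neg, zero_add, add_zero, neg_mul] at hA hB hC hD
  refine ⟨?_, ?_, ?_, ?_⟩
  · refine eq_of_sub_eq_zero ?_
    rw [← sub_eq_zero] at hA
    rw [← hA]
    abel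
  · refine eq_of_sub_eq_zero ?_
    rw [← sub_eq_zero] at hD
    rw [← hD]
    abel
  · refine eq_of_sub_eq_zero ?_
    rw [← sub_eq_zero] at hB
    rw [← hB]
    abel
  · refine eq_of_sub_eq_zero ?_
    rw [← sub_eq_zero] at hC
    rw [← neg_eq_zero, ← hC]
    abel

/-- Denominator. -/
noncomputable def den (M : Matrix (Fin 4) (Fin 4) ℤ) (τ : Mat2) : Mat2 := blkC M * τ + blkD M
/-- Numerator. -/
noncomputable def num (M : Matrix (Fin 4) (Fin 4) ℤ) (τ : Mat2) : Mat2 := blkA M * τ + blkB M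
/-- Action. -/
noncomputable def act (M : Matrix (Fin 4) (Fin 4) ℤ) (τ : Mat2) : Mat2 := num M τ * (den M τ)⁻¹

theorem herm_rel {M : Matrix (Fin 4) (Fin 4) ℤ} (h : M ∈ Sp4Z) (τ : Mat2) :
    (den M τ)ᴴ * num M τ - (num M τ)ᴴ * den M τ = τ - τᴴ := by
  obtain ⟨h1, h2, h3, h4⟩ := sp_rel h
  simp only [den, num, conjTranspose_add, conjTranspose_mul, blkA_ct, blkB_ct, blkC_ct, blkD_ct]
  have e1 : τᴴ * ((blkA M)ᵀ * blkC M) * τ = τᴴ * ((blkC M)ᵀ * blkA M) * τ := by rw [h1]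
  have e3 : τᴴ * ((blkA M)ᵀ * blkD M) = τᴴ * (1 + (blkC M)ᵀ * blkB M) := by rw [h3]
  have e4 : ((blkD M)ᵀ * blkA M) * τ = (1 + (blkB M)ᵀ * blkC M) * τ := by rw [h4]
  simp only [mul_add, add_mul, mul_one, one_mul, ← mul_assoc] at *
  rw [e1, e3, e4, h2]
  abel

theorem sym_rel {M : Matrix (Fin 4) (Fin 4) ℤ} (h : M ∈ Sp4Z) {τ : Mat2} (hτ : τᵀ = τ) :
    (den M τ)ᵀ * num M τ = (num M τ)ᵀ * den M τ := by
  obtain ⟨h1, h2, h3, h4⟩ := sp_rel h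
  simp only [den, num, transpose_add, transpose_mul, hτ]
  have e1 : τ * ((blkA M)ᵀ * blkC M) * τ = τ * ((blkC M)ᵀ * blkA M) * τ := by rw [h1]
  have e3 : τ * ((blkA M)ᵀ * blkD M) = τ * (1 + (blkC M)ᵀ * blkB M) := by rw [h3]
  have e4 : ((blkD M)ᵀ * blkA M) * τ = (1 + (blkB M)ᵀ * blkC M) * τ := by rw [h4]
  simp only [mul_add, add_mul, mul_one, one_mul, ← mul_assoc] at *
  rw [e1, e3, e4, h2]
  abel

theorem den_isUnit {M : Matrix (Fin 4) (Fin 4) ℤ} (h : M ∈ Sp4Z) {τ : Mat2} (hτ : τ ∈ SiegelH2) :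
    IsUnit (den M τ) := by
  rw [Matrix.isUnit_iff_isUnit_det, isUnit_iff_ne_zero]
  intro h0
  obtain ⟨v, hv, hv0⟩ := Matrix.exists_mulVec_eq_zero_iff.mpr h0
  have hp := (posDef_ofReal hτ.2).dotProduct_mulVec_pos hv
  have e := herm_rel h τ
  rw [sub_conjTranspose hτ.1] at e
  have e2 := congrArg (fun X => star v ⬝ᵥ X *ᵥ v) e
  simp only [sub_mulVec, ← mulVec_mulVec, hv0, mulVec_zero, sub_zero, smul_mulVec,
    dotProduct_smul] at e2
  rw [dotProduct_mulVec, ← star_mulVec, hv0] at e2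
  simp only [star_zero, zero_dotProduct, smul_eq_mul] at e2
  have := mul_ne_zero (mul_ne_zero (two_ne_zero' ℂ) Complex.I_ne_zero) hp.ne'
  exact this e2.symm

theorem act_mem {M : Matrix (Fin 4) (Fin 4) ℤ} (h : M ∈ Sp4Z) {τ : Mat2} (hτ : τ ∈ SiegelH2) :
    act M τ ∈ SiegelH2 := by
  have hu := den_isUnit h hτ
  have hd := (Matrix.isUnit_iff_isUnit_det _).1 hu
  have hut : IsUnit ((den M τ)ᵀ).det := by rwa [det_transpose]
  have hs : (act M τ)ᵀ = act M τ := by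
    have := sym_rel h hτ.1
    rw [act, transpose_mul, transpose_nonsing_inv]
    calc ((den M τ)ᵀ)⁻¹ * (num M τ)ᵀ
        = ((den M τ)ᵀ)⁻¹ * ((num M τ)ᵀ * den M τ) * (den M τ)⁻¹ := by
          rw [← mul_assoc, mul_nonsing_inv_cancel_right _ _ hd]
      _ = _ := by rw [← this, nonsing_inv_mul_cancel_left _ _ hut]
  refine ⟨hs, posDef_of_ofReal ?_⟩
  have hct : ((den M τ)⁻¹)ᴴ * (den M τ)ᴴ = 1 := by
    rw [← conjTranspose_mul, mul_nonsing_inv _ hd, conjTranspose_one]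
  have e : act M τ - (act M τ)ᴴ = ((den M τ)⁻¹)ᴴ * (τ - τᴴ) * (den M τ)⁻¹ := by
    rw [← herm_rel h τ, act, conjTranspose_mul, mul_sub, sub_mul]
    congr 1
    · rw [← mul_assoc, hct, one_mul]
    · rw [← mul_assoc, mul_nonsing_inv_cancel_right _ _ hd]
  rw [sub_conjTranspose hs, sub_conjTranspose hτ.1, mul_smul_comm, smul_mul_assoc] at e
  have e' := smul_right_injective Mat2 (mul_ne_zero (two_ne_zero' ℂ) Complex.I_ne_zero) e
  rw [e']
  refine (posDef_ofReal hτ.2).conjTranspose_mul_mul_same ?_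
  apply Matrix.mulVec_injective_of_isUnit
  exact (Matrix.isUnit_nonsing_inv_iff).2 hu

theorem num_mul (M N : Matrix (Fin 4) (Fin 4) ℤ) {τ : Mat2} (hu : IsUnit (den N τ)) :
    num (M * N) τ = num M (act N τ) * den N τ := by
  have hd := (Matrix.isUnit_iff_isUnit_det _).1 hu
  have : act N τ * den N τ = num N τ := nonsing_inv_mul_cancel_right _ _ hd
  rw [num, num, add_mul, mul_assoc, this, num, den, blkA_mul, blkB_mul]
  noncomm_ring

theorem den_mul (M N : Matrix (Fin 4) (Fin 4) ℤ) {τ : Mat2} (hu : IsUnit (den N τ)) :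
    den (M * N) τ = den M (act N τ) * den N τ := by
  have hd := (Matrix.isUnit_iff_isUnit_det _).1 hu
  have : act N τ * den N τ = num N τ := nonsing_inv_mul_cancel_right _ _ hd
  rw [den, den, add_mul, mul_assoc, this, num, den, blkC_mul, blkD_mul]
  noncomm_ring

theorem act_mul (M N : Matrix (Fin 4) (Fin 4) ℤ) {τ : Mat2} (hu : IsUnit (den N τ)) :
    act (M * N) τ = act M (act N τ) := by
  have hd := (Matrix.isUnit_iff_isUnit_det _).1 hu
  rw [act, num_mul M N hu, den_mul M N hu, Matrix.mul_inv_rev]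
  change _ = num M (act N τ) * (den M (act N τ))⁻¹
  rw [mul_assoc, ← mul_assoc (den N τ), mul_nonsing_inv _ hd, one_mul]

theorem den_one (τ : Mat2) : den 1 τ = 1 := by simp [den, blkC_one, blkD_one]
theorem act_one (τ : Mat2) : act 1 τ = τ := by
  simp [act, num, den_one, blkA_one, blkB_one]

/-- The units of the matrix ring which are symplectic and under which `Ψ10` is modular. -/
noncomputable def modGrp : Subgroup (Matrix (Fin 4) (Fin 4) ℤ)ˣ where
  carrier := {u | (u : Matrix (Fin 4) (Fin 4) ℤ) ∈ Sp4Z ∧ ∀ τ ∈ SiegelH2,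
    Ψ10 (act u τ) = (den u τ).det ^ 10 * Ψ10 τ}
  one_mem' := by
    refine ⟨by simp [Sp4Z], fun τ _ => ?_⟩
    simp [act_one, den_one]
  mul_mem' := by
    rintro u v ⟨hu, hu'⟩ ⟨hv, hv'⟩
    refine ⟨?_, fun τ hτ => ?_⟩
    · have hu : (u.val)ᵀ * Jmat * u.val = Jmat := hu
      have hv : (v.val)ᵀ * Jmat * v.val = Jmat := hv
      change (u.val * v.val)ᵀ * Jmat * (u.val * v.val) = Jmat
      rw [transpose_mul]
      calc _ = (v.val)ᵀ * ((u.val)ᵀ * Jmat * u.val) * v.val := by simp only [mul_assoc]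
        _ = _ := by rw [hu, hv]
    · rw [Units.val_mul, act_mul _ _ (den_isUnit hv hτ), den_mul _ _ (den_isUnit hv hτ),
        hu' _ (act_mem hv hτ), hv' _ hτ, det_mul]
      ring
  inv_mem' := by
    rintro u ⟨hu, hu'⟩
    have hi : ((u⁻¹ : (Matrix (Fin 4) (Fin 4) ℤ)ˣ) : Matrix (Fin 4) (Fin 4) ℤ) ∈ Sp4Z := by
      have hu : (u.val)ᵀ * Jmat * u.val = Jmat := hu
      change (u⁻¹.val)ᵀ * Jmat * u⁻¹.val = Jmat
      have h1 : u.val * u⁻¹.val = 1 := Units.mul_inv u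
      calc _ = (u⁻¹.val)ᵀ * ((u.val)ᵀ * Jmat * u.val) * u⁻¹.val := by rw [hu]
        _ = (u.val * u⁻¹.val)ᵀ * Jmat * (u.val * u⁻¹.val) := by
          rw [transpose_mul]; simp only [mul_assoc]
        _ = _ := by rw [h1]; simp
    refine ⟨hi, fun τ hτ => ?_⟩
    have h1 : u.val * u⁻¹.val = 1 := Units.mul_inv u
    have a := act_mul u.val u⁻¹.val (den_isUnit hi hτ)
    have d := den_mul u.val u⁻¹.val (den_isUnit hi hτ)
    rw [h1, act_one] at a
    rw [h1, den_one] at d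
    have d' := congrArg det d
    rw [det_mul, det_one] at d'
    have := hu' _ (act_mem hi hτ)
    rw [← a] at this
    rw [this, ← mul_assoc, ← mul_pow, mul_comm (det _), ← d', one_pow, one_mul]

end

section
open Matrix Complex

/-- A summand of the theta series in explicit coordinates. -/
noncomputable def tm (a₁ a₂ b₁ b₂ : ℤ) (t z w : ℂ) (p : ℤ × ℤ) : ℂ :=
  cexp ((Real.pi : ℂ) * I * (((p.2 : ℂ) + a₁ / 2) ^ 2 * t
    + 2 * ((p.2 : ℂ) + a₁ / 2) * ((p.1 : ℂ) + a₂ / 2) * z + ((p.1 : ℂ) + a₂ / 2) ^ 2 * w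
    + ((p.2 : ℂ) + a₁ / 2) * b₁ + ((p.1 : ℂ) + a₂ / 2) * b₂))

/-- The theta series in explicit coordinates. -/
noncomputable def tt (a₁ a₂ b₁ b₂ : ℤ) (t z w : ℂ) : ℂ := ∑' p, tm a₁ a₂ b₁ b₂ t z w p

theorem theta_eq (a₁ a₂ b₁ b₂ : ℤ) (t z w : ℂ) :
    theta (![a₁, a₂], ![b₁, b₂]) !![t, z; z, w] = tt a₁ a₂ b₁ b₂ t z w := by
  rw [theta, tt, ← ((finTwoArrowEquiv ℤ).trans (Equiv.prodComm ℤ ℤ)).tsum_eq]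
  refine tsum_congr fun n => ?_
  simp only [tm, Fin.sum_univ_two]
  congr 1
  simp
  ring

theorem exp_pi_even (k : ℤ) : cexp ((Real.pi : ℂ) * I * (2 * k)) = 1 := by
  rw [Complex.exp_eq_one_iff]
  exact ⟨k, by ring⟩

theorem tt_shift_a (a₁ a₂ b₁ b₂ k l : ℤ) (t z w : ℂ) :
    tt (a₁ + 2 * k) (a₂ + 2 * l) b₁ b₂ t z w = tt a₁ a₂ b₁ b₂ t z w := by
  rw [tt, tt, ← (Equiv.addRight ((l, k) : ℤ × ℤ)).tsum_eq (tm a₁ a₂ b₁ b₂ t z w)]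
  refine tsum_congr fun n => ?_
  simp only [tm, Equiv.coe_addRight, Prod.fst_add, Prod.snd_add]
  congr 1
  push_cast
  ring

theorem tt_shift_b (a₁ a₂ b₁ b₂ k l : ℤ) (t z w : ℂ) :
    tt a₁ a₂ (b₁ + 2 * k) (b₂ + 2 * l) t z w
      = cexp ((Real.pi : ℂ) * I * (a₁ * k + a₂ * l)) * tt a₁ a₂ b₁ b₂ t z w := by
  rw [tt, tt, ← tsum_mul_left]
  refine tsum_congr fun n => ?_
  simp only [tm]
  rw [← mul_one (cexp _ * cexp _), ← exp_pi_even (n.2 * k + n.1 * l), ← Complex.exp_add,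
    ← Complex.exp_add]
  congr 1
  push_cast
  ring

theorem tt_sq_congr {a₁ a₂ b₁ b₂ a₁' a₂' b₁' b₂' : ℤ} (t z w : ℂ)
    (h1 : (a₁' - a₁) % 2 = 0) (h2 : (a₂' - a₂) % 2 = 0)
    (h3 : (b₁' - b₁) % 2 = 0) (h4 : (b₂' - b₂) % 2 = 0) :
    tt a₁' a₂' b₁' b₂' t z w ^ 2 = tt a₁ a₂ b₁ b₂ t z w ^ 2 := by
  obtain ⟨k1, h1⟩ := Int.dvd_of_emod_eq_zero h1
  obtain ⟨k2, h2⟩ := Int.dvd_of_emod_eq_zero h2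
  obtain ⟨k3, h3⟩ := Int.dvd_of_emod_eq_zero h3
  obtain ⟨k4, h4⟩ := Int.dvd_of_emod_eq_zero h4
  obtain rfl : a₁' = a₁ + 2 * k1 := by omega
  obtain rfl : a₂' = a₂ + 2 * k2 := by omega
  obtain rfl : b₁' = b₁ + 2 * k3 := by omega
  obtain rfl : b₂' = b₂ + 2 * k4 := by omega
  rw [tt_shift_a, tt_shift_b, mul_pow, ← Complex.exp_nat_mul]
  have := exp_pi_even (a₁ * k3 + a₂ * k4)
  rw [show ((2 : ℕ) : ℂ) * ((Real.pi : ℂ) * I * (a₁ * k3 + a₂ * k4))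
    = (Real.pi : ℂ) * I * (2 * ((a₁ * k3 + a₂ * k4 : ℤ) : ℂ)) by push_cast; ring, this, one_mul]

theorem tt_T (a₁ a₂ b₁ b₂ : ℤ) (t z w : ℂ) :
    tt a₁ a₂ b₁ b₂ (t + 1) z w = cexp (-((Real.pi : ℂ) * I * (a₁ / 2 + a₁ ^ 2 / 4))) *
      tt a₁ a₂ (b₁ + a₁ + 1) b₂ t z w := by
  rw [tt, tt, ← tsum_mul_left]
  refine tsum_congr fun n => ?_
  obtain ⟨k, hk⟩ : (2 : ℤ) ∣ n.2 ^ 2 - n.2 := by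
    have := Int.even_mul_pred_self n.2
    rw [even_iff_two_dvd] at this
    rwa [show n.2 ^ 2 - n.2 = n.2 * (n.2 - 1) by ring]
  have hk' : (n.2 : ℂ) ^ 2 = n.2 + 2 * k := by
    have : n.2 ^ 2 = n.2 + 2 * k := by omega
    exact_mod_cast this
  simp only [tm]
  rw [← Complex.exp_add, Complex.exp_eq_exp_iff_exists_int]
  refine ⟨k, ?_⟩
  push_cast
  linear_combination (Real.pi : ℂ) * I * hk'

theorem tt_U (a₁ a₂ b₁ b₂ : ℤ) (t z w : ℂ) :
    tt a₁ a₂ b₁ b₂ (t + 2 * z + w) (z + w) w = tt a₁ (a₁ + a₂) (b₁ - b₂) b₂ t z w := by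
  let e : ℤ × ℤ ≃ ℤ × ℤ :=
    { toFun := fun p => (p.1 + p.2, p.2)
      invFun := fun p => (p.1 - p.2, p.2)
      left_inv := fun p => by simp
      right_inv := fun p => by simp }
  rw [tt, tt, ← e.tsum_eq (tm a₁ (a₁ + a₂) (b₁ - b₂) b₂ t z w)]
  refine tsum_congr fun n => ?_
  simp only [tm, e, Equiv.coe_fn_mk]
  congr 1
  push_cast
  ring

theorem tt_W (a₁ a₂ b₁ b₂ : ℤ) (t z w : ℂ) :
    tt a₁ a₂ b₁ b₂ w (-z) t = tt a₂ (-a₁) b₂ (-b₁) t z w := by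
  let e : ℤ × ℤ ≃ ℤ × ℤ :=
    { toFun := fun p => (-p.2, p.1)
      invFun := fun p => (p.2, -p.1)
      left_inv := fun p => by simp
      right_inv := fun p => by simp }
  rw [tt, tt, ← e.tsum_eq (tm a₂ (-a₁) b₂ (-b₁) t z w)]
  refine tsum_congr fun n => ?_
  simp only [tm, e, Equiv.coe_fn_mk]
  congr 1
  push_cast
  ring

theorem summable_gauss {c : ℝ} (hc : 0 < c) (a : ℤ) :
    Summable (fun n : ℤ => Real.exp (-(Real.pi * c * ((n : ℝ) + a / 2) ^ 2))) := by
  have h := ((summable_jacobiTheta₂_term_iff (c * a / 2 * I) (c * I)).2 (by simpa using hc)).norm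
  refine (h.mul_left (Real.exp (-(Real.pi * c * (a / 2) ^ 2)))).congr fun n => ?_
  rw [norm_jacobiTheta₂_term, ← Real.exp_add]
  congr 1
  have e : ((c * a / 2 * I : ℂ)).im = c * a / 2 := by
    rw [show (c * a / 2 * I : ℂ) = ((c * a / 2 : ℝ) : ℂ) * I by push_cast; ring]
    rw [Complex.im_ofReal_mul, Complex.I_im, mul_one]
  rw [e]
  simp
  ring

theorem summable_tm (a₁ a₂ b₁ b₂ : ℤ) {t z w : ℂ} (ht : 0 < t.im)
    (hd : 0 < t.im * w.im - z.im ^ 2) : Summable (tm a₁ a₂ b₁ b₂ t z w) := by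
  have hw : 0 < w.im := by
    by_contra hw
    nlinarith [sq_nonneg z.im]
  set c : ℝ := (t.im * w.im - z.im ^ 2) / (t.im + w.im) with hc
  have hc0 : 0 < c := by positivity
  have hcm : c * (t.im + w.im) = t.im * w.im - z.im ^ 2 := by
    rw [hc]; field_simp
  have hs := (summable_gauss hc0 a₂).mul_of_nonneg (summable_gauss hc0 a₁)
    (fun _ => (Real.exp_pos _).le) (fun _ => (Real.exp_pos _).le)
  refine Summable.of_norm_bounded hs fun p => ?_
  rw [tm, Complex.norm_exp, ← Real.exp_add, Real.exp_le_exp]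
  set x : ℝ := (p.2 : ℝ) + a₁ / 2 with hx
  set y : ℝ := (p.1 : ℝ) + a₂ / 2 with hy
  have ex : (p.2 : ℂ) + a₁ / 2 = (x : ℂ) := by rw [hx]; push_cast; ring
  have ey : (p.1 : ℂ) + a₂ / 2 = (y : ℂ) := by rw [hy]; push_cast; ring
  rw [ex, ey]
  have e : ((Real.pi : ℂ) * I * ((x : ℂ) ^ 2 * t + 2 * x * y * z + (y : ℂ) ^ 2 * w + x * b₁ + y * b₂)).re
      = - (Real.pi * (x ^ 2 * t.im + 2 * x * y * z.im + y ^ 2 * w.im)) := by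
    rw [show (Real.pi : ℂ) * I * ((x : ℂ) ^ 2 * t + 2 * x * y * z + (y : ℂ) ^ 2 * w + x * b₁ + y * b₂)
      = I * (((Real.pi * x ^ 2 : ℝ) : ℂ) * t + ((Real.pi * 2 * x * y : ℝ) : ℂ) * z
        + ((Real.pi * y ^ 2 : ℝ) : ℂ) * w + ((Real.pi * (x * b₁ + y * b₂) : ℝ) : ℂ)) by
        push_cast; ring]
    rw [Complex.I_mul_re]
    simp only [Complex.add_im, Complex.im_ofReal_mul, Complex.ofReal_im]
    ring
  rw [e]
  have key : c * (x ^ 2 + y ^ 2) ≤ x ^ 2 * t.im + 2 * x * y * z.im + y ^ 2 * w.im := by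
    have hpos : 0 < t.im + w.im := by positivity
    refine le_of_mul_le_mul_right ?_ hpos
    have : c * (x ^ 2 + y ^ 2) * (t.im + w.im) = (t.im * w.im - z.im ^ 2) * (x ^ 2 + y ^ 2) := by
      rw [← hcm]; ring
    rw [this]
    nlinarith [sq_nonneg (t.im * x + z.im * y), sq_nonneg (z.im * x + w.im * y)]
  have := mul_le_mul_of_nonneg_left key Real.pi_pos.le
  linarith

theorem one_dim (a b : ℤ) (c : ℂ) {t : ℂ} (ht : 0 < t.im) :
    ∑' n : ℤ, cexp ((Real.pi : ℂ) * I * (-((n : ℂ) + a / 2 - c) ^ 2 / t + ((n : ℂ) + a / 2) * b))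
    = (-I * t) ^ (1 / 2 : ℂ) * cexp ((Real.pi : ℂ) * I * (a * b / 2)) *
      ∑' m : ℤ, cexp ((Real.pi : ℂ) * I * (((m : ℂ) + b / 2) ^ 2 * t + 2 * ((m : ℂ) + b / 2) * c
        + ((m : ℂ) + b / 2) * (-a))) := by
  have t0 : t ≠ 0 := by rintro rfl; simp at ht
  have hr : (-I * t) ^ (1 / 2 : ℂ) ≠ 0 := by
    rw [Complex.cpow_ne_zero_iff]
    left
    exact mul_ne_zero (neg_ne_zero.2 I_ne_zero) t0
  have h := jacobiTheta₂_functional_equation (t * b / 2 + c - a / 2) t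
  have e1 : ∑' m : ℤ, cexp ((Real.pi : ℂ) * I * (((m : ℂ) + b / 2) ^ 2 * t
        + 2 * ((m : ℂ) + b / 2) * c + ((m : ℂ) + b / 2) * (-a)))
      = cexp ((Real.pi : ℂ) * I * ((b / 2) ^ 2 * t + b * c - a * b / 2)) *
        jacobiTheta₂ (t * b / 2 + c - a / 2) t := by
    rw [jacobiTheta₂, ← tsum_mul_left]
    refine tsum_congr fun m => ?_
    rw [jacobiTheta₂_term, ← Complex.exp_add]
    congr 1
    ring
  have e2 : ∑' n : ℤ, cexp ((Real.pi : ℂ) * I * (-((n : ℂ) + a / 2 - c) ^ 2 / t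
        + ((n : ℂ) + a / 2) * b))
      = cexp ((Real.pi : ℂ) * I * (-(a / 2 - c) ^ 2 / t + a * b / 2)) *
        jacobiTheta₂ ((t * b / 2 + c - a / 2) / t) (-1 / t) := by
    rw [jacobiTheta₂, ← tsum_mul_left]
    refine tsum_congr fun m => ?_
    rw [jacobiTheta₂_term, ← Complex.exp_add]
    congr 1
    field_simp
    ring
  rw [e1, e2, h]
  have e3 : cexp ((Real.pi : ℂ) * I * (-(a / 2 - c) ^ 2 / t + a * b / 2))
      = cexp ((Real.pi : ℂ) * I * (a * b / 2)) *
        (cexp ((Real.pi : ℂ) * I * ((b / 2) ^ 2 * t + b * c - a * b / 2)) *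
        cexp (-(Real.pi : ℂ) * I * (t * b / 2 + c - a / 2) ^ 2 / t)) := by
    rw [← Complex.exp_add, ← Complex.exp_add]
    congr 1
    field_simp
    ring
  rw [e3]
  field_simp

theorem tt_S (a₁ a₂ b₁ b₂ : ℤ) {t z w : ℂ} (ht : 0 < t.im)
    (hd : 0 < t.im * w.im - z.im ^ 2) (ht' : 0 < (-1 / t).im)
    (hd' : 0 < (-1 / t).im * (w - z ^ 2 / t).im - (z / t).im ^ 2) :
    tt a₁ a₂ b₁ b₂ (-1 / t) (z / t) (w - z ^ 2 / t) =
      (-I * t) ^ (1 / 2 : ℂ) * cexp ((Real.pi : ℂ) * I * (a₁ * b₁ / 2)) *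
        tt b₁ a₂ (-a₁) b₂ t z w := by
  have t0 : t ≠ 0 := by rintro rfl; simp at ht
  rw [tt, tt, (summable_tm _ _ _ _ ht' hd').tsum_prod, (summable_tm _ _ _ _ ht hd).tsum_prod,
    ← tsum_mul_left]
  refine tsum_congr fun m => ?_
  set y : ℂ := (m : ℂ) + a₂ / 2 with hy
  have h := congrArg (fun X => cexp ((Real.pi : ℂ) * I * (y ^ 2 * w + y * b₂)) * X)
    (one_dim a₁ b₁ (y * z) ht)
  rw [mul_left_comm, ← tsum_mul_left, ← tsum_mul_left] at h
  convert h using 1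
  · refine tsum_congr fun n => ?_
    rw [tm, ← Complex.exp_add]
    congr 1
    simp only [← hy]
    field_simp
    ring
  · congr 1
    refine tsum_congr fun n => ?_
    rw [tm, ← Complex.exp_add]
    congr 1
    simp only [← hy]
    push_cast
    ring

end

section
open Matrix MatrixGroups

/-- Embedding of `SL(2,ℤ)` in the first coordinate pair. -/
def emb1 : SL(2, ℤ) →* Matrix (Fin 4) (Fin 4) ℤ where
  toFun g := !![g 0 0, 0, g 0 1, 0; 0, 1, 0, 0; g 1 0, 0, g 1 1, 0; 0, 0, 0, 1]
  map_one' := by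
    ext i j; fin_cases i <;> fin_cases j <;> simp
  map_mul' g h := by
    ext i j
    fin_cases i <;> fin_cases j <;>
      simp [Matrix.mul_apply, Fin.sum_univ_four, Fin.sum_univ_two]

/-- Embedding of `SL(2,ℤ)` in the second coordinate pair. -/
def emb2 : SL(2, ℤ) →* Matrix (Fin 4) (Fin 4) ℤ where
  toFun g := !![1, 0, 0, 0; 0, g 0 0, 0, g 0 1; 0, 0, 1, 0; 0, g 1 0, 0, g 1 1]
  map_one' := by
    ext i j; fin_cases i <;> fin_cases j <;> simp
  map_mul' g h := by
    ext i j
    fin_cases i <;> fin_cases j <;>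
      simp [Matrix.mul_apply, Fin.sum_univ_four, Fin.sum_univ_two]

/-- Embedding of `SL(2,ℤ)` as block diagonal matrices. -/
def embd : SL(2, ℤ) →* Matrix (Fin 4) (Fin 4) ℤ where
  toFun g := !![g 0 0, g 0 1, 0, 0; g 1 0, g 1 1, 0, 0; 0, 0, g 1 1, -g 1 0; 0, 0, -g 0 1, g 0 0]
  map_one' := by
    ext i j; fin_cases i <;> fin_cases j <;> simp
  map_mul' g h := by
    ext i j
    fin_cases i <;> fin_cases j <;>
      simp [Matrix.mul_apply, Fin.sum_univ_four, Fin.sum_univ_two] <;> ring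

theorem exists_sl2 (x y : ℤ) : ∃ g : SL(2, ℤ), g 1 0 * x + g 1 1 * y = 0 := by
  by_cases h : x = 0 ∧ y = 0
  · exact ⟨1, by simp [h.1, h.2]⟩
  · have hg : (Int.gcd x y : ℤ) ≠ 0 := by
      intro h0
      apply h
      exact Int.gcd_eq_zero_iff.1 (by exact_mod_cast h0)
    obtain ⟨x', hx⟩ := Int.gcd_dvd_left x y
    obtain ⟨y', hy⟩ := Int.gcd_dvd_right x y
    have hb := Int.gcd_eq_gcd_ab x y
    set d : ℤ := (Int.gcd x y : ℤ)
    set p := Int.gcdA x y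
    set q := Int.gcdB x y
    have h1 : x' * p + y' * q = 1 := by
      apply mul_left_cancel₀ hg
      linear_combination -hb - p * hx - q * hy
    refine ⟨⟨!![p, q; -y', x'], by rw [Matrix.det_fin_two_of]; linarith⟩, ?_⟩
    simp
    rw [hx, hy]
    ring

theorem sp_entries {M : Matrix (Fin 4) (Fin 4) ℤ} (h : M ∈ Sp4Z) (i j : Fin 4) :
    M 0 i * M 2 j + M 1 i * M 3 j - M 2 i * M 0 j - M 3 i * M 1 j = Jmat i j := by
  have h : Mᵀ * Jmat * M = Jmat := h
  rw [← congrFun (congrFun h i) j]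
  simp [Matrix.mul_apply, Fin.sum_univ_four, Jmat]
  ring

theorem sp_of_entries {M : Matrix (Fin 4) (Fin 4) ℤ}
    (h : ∀ i j, M 0 i * M 2 j + M 1 i * M 3 j - M 2 i * M 0 j - M 3 i * M 1 j = Jmat i j) :
    M ∈ Sp4Z := by
  change Mᵀ * Jmat * M = Jmat
  ext i j
  rw [← h i j]
  simp [Matrix.mul_apply, Fin.sum_univ_four, Jmat]
  ring

theorem sp_mul {M N : Matrix (Fin 4) (Fin 4) ℤ} (hu : M ∈ Sp4Z) (hv : N ∈ Sp4Z) :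
    M * N ∈ Sp4Z := by
  have hu : Mᵀ * Jmat * M = Jmat := hu
  have hv : Nᵀ * Jmat * N = Jmat := hv
  change (M * N)ᵀ * Jmat * (M * N) = Jmat
  rw [transpose_mul]
  calc _ = Nᵀ * (Mᵀ * Jmat * M) * N := by simp only [mul_assoc]
    _ = _ := by rw [hu, hv]

theorem sl_det (g : SL(2, ℤ)) : g 0 0 * g 1 1 - g 0 1 * g 1 0 = 1 := by
  rw [← Matrix.det_fin_two, g.det_coe]

theorem emb1_sp (g : SL(2, ℤ)) : emb1 g ∈ Sp4Z := by
  have := sl_det g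
  refine sp_of_entries fun i j => ?_
  fin_cases i <;> fin_cases j <;> simp [emb1, Jmat] <;> linarith

theorem emb2_sp (g : SL(2, ℤ)) : emb2 g ∈ Sp4Z := by
  have := sl_det g
  refine sp_of_entries fun i j => ?_
  fin_cases i <;> fin_cases j <;> simp [emb2, Jmat] <;> linarith

theorem embd_sp (g : SL(2, ℤ)) : embd g ∈ Sp4Z := by
  have := sl_det g
  refine sp_of_entries fun i j => ?_
  fin_cases i <;> fin_cases j <;> simp [embd, Jmat] <;> linarith

/-- Upper triangular unipotent element. -/
def upp (k : ℤ) : SL(2, ℤ) := ⟨!![1, k; 0, 1], by simp [Matrix.det_fin_two_of]⟩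

theorem generate (Γ : Subgroup (Matrix (Fin 4) (Fin 4) ℤ)ˣ)
    (h1 : ∀ g, emb1.toHomUnits g ∈ Γ) (h2 : ∀ g, emb2.toHomUnits g ∈ Γ)
    (hd : ∀ g, embd.toHomUnits g ∈ Γ) (u : (Matrix (Fin 4) (Fin 4) ℤ)ˣ)
    (hu : u.val ∈ Sp4Z) : u ∈ Γ := by
  -- step 6: translations
  have s6 : ∀ (y z : ℤ) (u : (Matrix (Fin 4) (Fin 4) ℤ)ˣ),
      u.val = !![1, 0, y, z; 0, 1, z, 0; 0, 0, 1, 0; 0, 0, 0, 1] → u ∈ Γ := by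
    intro y z u hu
    have e : u = embd.toHomUnits (upp z) * emb2.toHomUnits (upp 1) * embd.toHomUnits (upp (-z))
        * emb1.toHomUnits (upp (y - z ^ 2)) * emb2.toHomUnits (upp (-1)) := by
      ext1
      rw [hu]
      simp only [Units.val_mul, MonoidHom.coe_toHomUnits]
      ext i j
      fin_cases i <;> fin_cases j <;>
        simp [emb1, emb2, embd, upp, Matrix.mul_apply, Fin.sum_univ_four] <;> ring
    rw [e]
    exact Γ.mul_mem (Γ.mul_mem (Γ.mul_mem (Γ.mul_mem (hd _) (h2 _)) (hd _)) (h1 _)) (h2 _)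
  -- step 5
  have s5 : ∀ (x y z : ℤ) (u : (Matrix (Fin 4) (Fin 4) ℤ)ˣ),
      u.val = !![1, x, y, z; 0, 1, z, 0; 0, 0, 1, 0; 0, 0, -x, 1] → u ∈ Γ := by
    intro x y z u hu
    rw [← Γ.mul_mem_cancel_left (hd (upp (-x)))]
    apply s6 (y - x * z) z
    rw [Units.val_mul, hu, MonoidHom.coe_toHomUnits]
    ext i j
    fin_cases i <;> fin_cases j <;>
      simp [embd, upp, Matrix.mul_apply, Fin.sum_univ_four] <;> ring
  -- step 4
  have s4 : ∀ (u : (Matrix (Fin 4) (Fin 4) ℤ)ˣ), u.val ∈ Sp4Z →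
      u.val 0 0 = 1 → u.val 1 0 = 0 → u.val 2 0 = 0 → u.val 3 0 = 0 → u ∈ Γ := by
    intro u hu e0 e1 e2 e3
    have r := sp_entries hu
    have r01 := r 0 1
    have r02 := r 0 2
    have r03 := r 0 3
    have r13 := r 1 3
    simp only [e0, e1, e2, e3, Jmat] at r01 r02 r03
    simp at r01 r02 r03
    have r13 : u.val 1 1 * u.val 3 3 - u.val 3 1 * u.val 1 3 = 1 := by
      simp [Jmat] at r13
      rw [r01, r03] at r13
      linarith
    let g : SL(2, ℤ) := ⟨!![u.val 3 3, -u.val 1 3; -u.val 3 1, u.val 1 1], by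
      rw [Matrix.det_fin_two_of]; linarith⟩
    rw [← Γ.mul_mem_cancel_left (h2 g)]
    have hN : emb2 g * u.val ∈ Sp4Z := sp_mul (emb2_sp _) hu
    have q := sp_entries hN
    have q12 := q 1 2
    have q23 := q 2 3
    have hN' : ∃ x y z w v : ℤ, emb2 g * u.val
        = !![1, x, y, z; 0, 1, w, 0; 0, 0, 1, 0; 0, 0, v, 1] := by
      refine ⟨u.val 0 1, u.val 0 2, u.val 0 3, u.val 3 3 * u.val 1 2 - u.val 1 3 * u.val 3 2,
        - u.val 3 1 * u.val 1 2 + u.val 1 1 * u.val 3 2, ?_⟩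
      ext i j
      fin_cases i <;> fin_cases j <;>
        simp [emb2, g, Matrix.mul_apply, Fin.sum_univ_four, e0, e1, e2, e3, r01, r02, r03]
        <;> linarith
    obtain ⟨x, y, z, w, v, hN'⟩ := hN'
    rw [hN'] at q12 q23
    simp [Jmat] at q12 q23
    apply s5 x y z
    rw [Units.val_mul, MonoidHom.coe_toHomUnits, hN']
    obtain rfl : v = -x := by linarith
    obtain rfl : w = z := by linarith
    rfl
  -- step 3
  have s3 : ∀ (u : (Matrix (Fin 4) (Fin 4) ℤ)ˣ), u.val ∈ Sp4Z →
      u.val 1 0 = 0 → u.val 2 0 = 0 → u.val 3 0 = 0 → u ∈ Γ := by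
    intro u hu e1 e2 e3
    have r02 := sp_entries hu 0 2
    simp [e1, e2, e3, Jmat] at r02
    let g : SL(2, ℤ) := ⟨!![u.val 2 2, 0; 0, u.val 0 0], by
      rw [Matrix.det_fin_two_of]; linarith⟩
    rw [← Γ.mul_mem_cancel_left (h1 g)]
    apply s4
    · exact sp_mul (emb1_sp _) hu
    all_goals
      rw [Units.val_mul, MonoidHom.coe_toHomUnits]
      simp [emb1, g, Matrix.mul_apply, Fin.sum_univ_four, e1, e2, e3]
    linarith
  have s2 : ∀ (u : (Matrix (Fin 4) (Fin 4) ℤ)ˣ), u.val ∈ Sp4Z →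
      u.val 2 0 = 0 → u.val 3 0 = 0 → u ∈ Γ := by
    intro u hu e2 e3
    obtain ⟨g, hg⟩ := exists_sl2 (u.val 0 0) (u.val 1 0)
    rw [← Γ.mul_mem_cancel_left (hd g)]
    apply s3
    · exact sp_mul (embd_sp _) hu
    all_goals
      rw [Units.val_mul, MonoidHom.coe_toHomUnits]
      simp [embd, Matrix.mul_apply, Fin.sum_univ_four, e2, e3]
    exact hg
  have s1 : ∀ (u : (Matrix (Fin 4) (Fin 4) ℤ)ˣ), u.val ∈ Sp4Z →
      u.val 2 0 = 0 → u ∈ Γ := by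
    intro u hu e2
    obtain ⟨g, hg⟩ := exists_sl2 (u.val 1 0) (u.val 3 0)
    rw [← Γ.mul_mem_cancel_left (h2 g)]
    apply s2
    · exact sp_mul (emb2_sp _) hu
    all_goals
      rw [Units.val_mul, MonoidHom.coe_toHomUnits]
      simp [emb2, Matrix.mul_apply, Fin.sum_univ_four, e2]
    exact hg
  obtain ⟨g, hg⟩ := exists_sl2 (u.val 0 0) (u.val 2 0)
  rw [← Γ.mul_mem_cancel_left (h1 g)]
  apply s1
  · exact sp_mul (emb1_sp _) hu
  · rw [Units.val_mul, MonoidHom.coe_toHomUnits]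
    simp [emb1, Matrix.mul_apply, Fin.sum_univ_four]
    exact hg

theorem generate' (Γ : Subgroup (Matrix (Fin 4) (Fin 4) ℤ)ˣ)
    (h1S : emb1.toHomUnits ModularGroup.S ∈ Γ) (h1T : emb1.toHomUnits ModularGroup.T ∈ Γ)
    (hdS : embd.toHomUnits ModularGroup.S ∈ Γ) (hdT : embd.toHomUnits ModularGroup.T ∈ Γ)
    (u : (Matrix (Fin 4) (Fin 4) ℤ)ˣ) (hu : u.val ∈ Sp4Z) : u ∈ Γ := by
  have key : ∀ f : SL(2, ℤ) →* (Matrix (Fin 4) (Fin 4) ℤ)ˣ, f ModularGroup.S ∈ Γ →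
      f ModularGroup.T ∈ Γ → ∀ g, f g ∈ Γ := by
    intro f hS hT g
    have : Subgroup.closure {ModularGroup.S, ModularGroup.T} ≤ Γ.comap f := by
      rw [Subgroup.closure_le]
      rintro x (rfl | rfl)
      · exact hS
      · exact hT
    rw [SpecialLinearGroup.SL2Z_generators] at this
    exact this (Subgroup.mem_top g)
  have h1 := key _ h1S h1T
  have hd := key _ hdS hdT
  refine generate Γ h1 (fun g => ?_) hd u hu
  have e : emb2.toHomUnits g = embd.toHomUnits ModularGroup.S * emb1.toHomUnits g *
      (embd.toHomUnits ModularGroup.S)⁻¹ := by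
    rw [eq_mul_inv_iff_mul_eq]
    ext1
    simp only [Units.val_mul, MonoidHom.coe_toHomUnits]
    ext i j
    fin_cases i <;> fin_cases j <;>
      simp [emb1, emb2, embd, ModularGroup.S, Matrix.mul_apply, Fin.sum_univ_four]
  rw [e]
  exact Γ.mul_mem (Γ.mul_mem hdS (h1 g)) (Γ.inv_mem hdS)

end

section
open Matrix Complex

theorem exists_coords {τ : Mat2} (h : τ ∈ SiegelH2) :
    ∃ t z w : ℂ, τ = !![t, z; z, w] := by
  refine ⟨τ 0 0, τ 0 1, τ 1 1, ?_⟩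
  have h10 : τ 1 0 = τ 0 1 := by conv_rhs => rw [← h.1, transpose_apply]
  ext i j
  fin_cases i <;> fin_cases j <;> simp [h10]

theorem coords_pos {t z w : ℂ} (h : !![t, z; z, w] ∈ SiegelH2) :
    0 < t.im ∧ 0 < t.im * w.im - z.im ^ 2 := by
  have h1 := h.2.diag_pos (i := 0)
  have h2 := h.2.det_pos
  rw [Matrix.det_fin_two] at h2
  simp at h1 h2
  exact ⟨h1, by linarith⟩

theorem psi_eq (t z w : ℂ) : Ψ10 !![t, z; z, w] =
    tt 0 0 0 0 t z w ^ 2 * tt 0 0 0 1 t z w ^ 2 * tt 0 0 1 0 t z w ^ 2 * tt 0 0 1 1 t z w ^ 2 *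
    tt 0 1 0 0 t z w ^ 2 * tt 0 1 1 0 t z w ^ 2 * tt 1 0 0 0 t z w ^ 2 * tt 1 0 0 1 t z w ^ 2 *
    tt 1 1 0 0 t z w ^ 2 * tt 1 1 1 1 t z w ^ 2 := by
  simp only [← theta_eq, Ψ10, Fin.prod_univ_succ, δev]
  simp
  ring

theorem psi_T (t z w : ℂ) : Ψ10 !![t + 1, z; z, w] = Ψ10 !![t, z; z, w] := by
  have hI : cexp (-((Real.pi : ℂ) * I * (1 / 2 + 1 ^ 2 / 4))) ^ 8 = 1 := by
    rw [← Complex.exp_nat_mul, Complex.exp_eq_one_iff]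
    exact ⟨-3, by push_cast; ring⟩
  have c : ∀ {a₁ a₂ b₁ b₂ b₁' : ℤ}, (b₁' - b₁) % 2 = 0 →
      tt a₁ a₂ b₁' b₂ t z w ^ 2 = tt a₁ a₂ b₁ b₂ t z w ^ 2 := fun h =>
    tt_sq_congr t z w (by simp) (by simp) h (by simp)
  rw [psi_eq, psi_eq]
  simp only [tt_T, mul_pow]
  rw [c (b₁ := 1) (b₁' := 0 + 0 + 1) (by decide), c (b₁ := 1) (b₁' := 0 + 0 + 1) (by decide),
    c (b₁ := 0) (b₁' := 1 + 0 + 1) (by decide), c (b₁ := 0) (b₁' := 1 + 0 + 1) (by decide),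
    c (b₁ := 1) (b₁' := 0 + 0 + 1) (by decide), c (b₁ := 0) (b₁' := 1 + 0 + 1) (by decide),
    c (b₁ := 0) (b₁' := 0 + 1 + 1) (by decide), c (b₁ := 0) (b₁' := 0 + 1 + 1) (by decide),
    c (b₁ := 0) (b₁' := 0 + 1 + 1) (by decide), c (b₁ := 1) (b₁' := 1 + 1 + 1) (by decide)]
  simp only [Int.cast_zero, Int.cast_one]
  rw [show -((Real.pi : ℂ) * I * (0 / 2 + 0 ^ 2 / 4)) = 0 by ring, Complex.exp_zero]
  linear_combination (tt 0 0 0 0 t z w ^ 2 * tt 0 0 0 1 t z w ^ 2 * tt 0 0 1 0 t z w ^ 2 *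
    tt 0 0 1 1 t z w ^ 2 * tt 0 1 0 0 t z w ^ 2 * tt 0 1 1 0 t z w ^ 2 * tt 1 0 0 0 t z w ^ 2 *
    tt 1 0 0 1 t z w ^ 2 * tt 1 1 0 0 t z w ^ 2 * tt 1 1 1 1 t z w ^ 2) * hI

theorem psi_U (t z w : ℂ) :
    Ψ10 !![t + 2 * z + w, z + w; z + w, w] = Ψ10 !![t, z; z, w] := by
  have c := fun (a₁ a₂ b₁ b₂ a₁' a₂' b₁' b₂' : ℤ) =>
    @tt_sq_congr a₁ a₂ b₁ b₂ a₁' a₂' b₁' b₂' t z w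
  rw [psi_eq, psi_eq]
  simp only [tt_U]
  rw [c 0 0 0 0 0 (0 + 0) (0 - 0) 0 (by decide) (by decide) (by decide) (by decide),
    c 0 0 1 1 0 (0 + 0) (0 - 1) 1 (by decide) (by decide) (by decide) (by decide),
    c 0 0 1 0 0 (0 + 0) (1 - 0) 0 (by decide) (by decide) (by decide) (by decide),
    c 0 0 0 1 0 (0 + 0) (1 - 1) 1 (by decide) (by decide) (by decide) (by decide),
    c 0 1 0 0 0 (0 + 1) (0 - 0) 0 (by decide) (by decide) (by decide) (by decide),
    c 0 1 1 0 0 (0 + 1) (1 - 0) 0 (by decide) (by decide) (by decide) (by decide),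
    c 1 1 0 0 1 (1 + 0) (0 - 0) 0 (by decide) (by decide) (by decide) (by decide),
    c 1 1 1 1 1 (1 + 0) (0 - 1) 1 (by decide) (by decide) (by decide) (by decide),
    c 1 0 0 0 1 (1 + 1) (0 - 0) 0 (by decide) (by decide) (by decide) (by decide),
    c 1 0 0 1 1 (1 + 1) (1 - 1) 1 (by decide) (by decide) (by decide) (by decide)]
  ring

theorem psi_W (t z w : ℂ) : Ψ10 !![w, -z; -z, t] = Ψ10 !![t, z; z, w] := by
  have c := fun (a₁ a₂ b₁ b₂ a₁' a₂' b₁' b₂' : ℤ) =>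
    @tt_sq_congr a₁ a₂ b₁ b₂ a₁' a₂' b₁' b₂' t z w
  rw [psi_eq, psi_eq]
  simp only [tt_W]
  rw [c 0 0 0 0 0 (-0) 0 (-0) (by decide) (by decide) (by decide) (by decide),
    c 0 0 1 0 0 (-0) 1 (-0) (by decide) (by decide) (by decide) (by decide),
    c 0 0 0 1 0 (-0) 0 (-1) (by decide) (by decide) (by decide) (by decide),
    c 0 0 1 1 0 (-0) 1 (-1) (by decide) (by decide) (by decide) (by decide),
    c 1 0 0 0 1 (-0) 0 (-0) (by decide) (by decide) (by decide) (by decide),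
    c 1 0 0 1 1 (-0) 0 (-1) (by decide) (by decide) (by decide) (by decide),
    c 0 1 0 0 0 (-1) 0 (-0) (by decide) (by decide) (by decide) (by decide),
    c 0 1 1 0 0 (-1) 1 (-0) (by decide) (by decide) (by decide) (by decide),
    c 1 1 0 0 1 (-1) 0 (-0) (by decide) (by decide) (by decide) (by decide),
    c 1 1 1 1 1 (-1) 1 (-1) (by decide) (by decide) (by decide) (by decide)]
  ring

theorem psi_S {t z w : ℂ} (ht : 0 < t.im)
    (hd : 0 < t.im * w.im - z.im ^ 2) (ht' : 0 < (-1 / t).im)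
    (hd' : 0 < (-1 / t).im * (w - z ^ 2 / t).im - (z / t).im ^ 2) :
    Ψ10 !![-1 / t, z / t; z / t, w - z ^ 2 / t] = t ^ 10 * Ψ10 !![t, z; z, w] := by
  have c := fun (a₁ a₂ b₁ b₂ a₁' a₂' b₁' b₂' : ℤ) =>
    @tt_sq_congr a₁ a₂ b₁ b₂ a₁' a₂' b₁' b₂' t z w
  have hr : ((-I * t) ^ (1 / 2 : ℂ)) ^ 2 = -I * t := by
    rw [← Complex.cpow_nat_mul]
    norm_num
  have hE : cexp ((Real.pi : ℂ) * I * (1 * 1 / 2)) ^ 2 = -1 := by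
    rw [← Complex.exp_nat_mul, ← Complex.exp_pi_mul_I]
    congr 1
    push_cast
    ring
  rw [psi_eq, psi_eq]
  simp only [tt_S _ _ _ _ ht hd ht' hd', mul_pow, hr]
  rw [c 0 0 0 0 0 0 (-0) 0 (by decide) (by decide) (by decide) (by decide),
    c 0 0 0 1 0 0 (-0) 1 (by decide) (by decide) (by decide) (by decide),
    c 1 0 0 0 1 0 (-0) 0 (by decide) (by decide) (by decide) (by decide),
    c 1 0 0 1 1 0 (-0) 1 (by decide) (by decide) (by decide) (by decide),
    c 0 1 0 0 0 1 (-0) 0 (by decide) (by decide) (by decide) (by decide),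
    c 1 1 0 0 1 1 (-0) 0 (by decide) (by decide) (by decide) (by decide),
    c 0 0 1 0 0 0 (-1) 0 (by decide) (by decide) (by decide) (by decide),
    c 0 0 1 1 0 0 (-1) 1 (by decide) (by decide) (by decide) (by decide),
    c 0 1 1 0 0 1 (-1) 0 (by decide) (by decide) (by decide) (by decide),
    c 1 1 1 1 1 1 (-1) 1 (by decide) (by decide) (by decide) (by decide)]
  simp only [Int.cast_zero, Int.cast_one, hE]
  have e1 : (Real.pi : ℂ) * I * (0 * 0 / 2) = 0 := by ring
  have e2 : (Real.pi : ℂ) * I * (0 * 1 / 2) = 0 := by ring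
  have e3 : (Real.pi : ℂ) * I * (1 * 0 / 2) = 0 := by ring
  rw [e1, e2, e3, Complex.exp_zero]
  have hI : I ^ 10 = -1 := by
    rw [show (10 : ℕ) = 2 * 5 by norm_num, pow_mul, Complex.I_sq]; norm_num
  linear_combination (-t ^ 10 * (tt 0 0 0 0 t z w ^ 2 * tt 0 0 0 1 t z w ^ 2 *
    tt 0 0 1 0 t z w ^ 2 *
    tt 0 0 1 1 t z w ^ 2 * tt 0 1 0 0 t z w ^ 2 * tt 0 1 1 0 t z w ^ 2 * tt 1 0 0 0 t z w ^ 2 *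
    tt 1 0 0 1 t z w ^ 2 * tt 1 1 0 0 t z w ^ 2 * tt 1 1 1 1 t z w ^ 2)) * hI

theorem inv_of_mul {A B : Mat2} (h : A * B = 1) : A⁻¹ = B := Matrix.inv_eq_right_inv h

theorem mem_S1 : emb1.toHomUnits ModularGroup.S ∈ modGrp := by
  refine ⟨emb1_sp _, fun τ hτ => ?_⟩
  have hm := act_mem (emb1_sp ModularGroup.S) hτ
  rw [MonoidHom.coe_toHomUnits]
  obtain ⟨t, z, w, rfl⟩ := exists_coords hτ
  obtain ⟨ht, hd⟩ := coords_pos hτ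
  have t0 : t ≠ 0 := by rintro rfl; simp at ht
  have hden : den (emb1 ModularGroup.S) !![t, z; z, w] = !![t, z; 0, 1] := by
    ext i j
    fin_cases i <;> fin_cases j <;>
      simp [den, blkC, blkD, emb1, ModularGroup.S, Matrix.mul_apply, Fin.sum_univ_two]
  have hnum : num (emb1 ModularGroup.S) !![t, z; z, w] = !![-1, 0; z, w] := by
    ext i j
    fin_cases i <;> fin_cases j <;>
      simp [num, blkA, blkB, emb1, ModularGroup.S, Matrix.mul_apply, Fin.sum_univ_two]
  have hact : act (emb1 ModularGroup.S) !![t, z; z, w]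
      = !![-1 / t, z / t; z / t, w - z ^ 2 / t] := by
    rw [act, hnum, hden, inv_of_mul (B := !![1 / t, -z / t; 0, 1])]
    · ext i j
      fin_cases i <;> fin_cases j <;> simp [Matrix.mul_apply, Fin.sum_univ_two] <;> ring
    · ext i j
      fin_cases i <;> fin_cases j <;> simp [Matrix.mul_apply, Fin.sum_univ_two, t0]
      field_simp
      ring
  rw [hact] at hm
  obtain ⟨ht', hd'⟩ := coords_pos hm
  rw [hact, hden, psi_S ht hd ht' hd', Matrix.det_fin_two_of]
  ring

theorem mem_T1 : emb1.toHomUnits ModularGroup.T ∈ modGrp := by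
  refine ⟨emb1_sp _, fun τ hτ => ?_⟩
  rw [MonoidHom.coe_toHomUnits]
  obtain ⟨t, z, w, rfl⟩ := exists_coords hτ
  have hden : den (emb1 ModularGroup.T) !![t, z; z, w] = 1 := by
    ext i j
    fin_cases i <;> fin_cases j <;>
      simp [den, blkC, blkD, emb1, ModularGroup.T, Matrix.mul_apply, Fin.sum_univ_two]
  have hact : act (emb1 ModularGroup.T) !![t, z; z, w] = !![t + 1, z; z, w] := by
    rw [act, hden, inv_one, mul_one]
    ext i j
    fin_cases i <;> fin_cases j <;>
      simp [num, blkA, blkB, emb1, ModularGroup.T, Matrix.mul_apply, Fin.sum_univ_two]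
  rw [hact, hden, psi_T]
  simp

theorem mem_Sd : embd.toHomUnits ModularGroup.S ∈ modGrp := by
  refine ⟨embd_sp _, fun τ hτ => ?_⟩
  rw [MonoidHom.coe_toHomUnits]
  obtain ⟨t, z, w, rfl⟩ := exists_coords hτ
  have hden : den (embd ModularGroup.S) !![t, z; z, w] = !![0, -1; 1, 0] := by
    ext i j
    fin_cases i <;> fin_cases j <;>
      simp [den, blkC, blkD, embd, ModularGroup.S, Matrix.mul_apply, Fin.sum_univ_two]
  have hact : act (embd ModularGroup.S) !![t, z; z, w] = !![w, -z; -z, t] := by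
    rw [act, hden, inv_of_mul (B := !![0, 1; -1, 0])]
    · ext i j
      fin_cases i <;> fin_cases j <;>
        simp [num, blkA, blkB, embd, ModularGroup.S, Matrix.mul_apply, Fin.sum_univ_two]
    · ext i j
      fin_cases i <;> fin_cases j <;> simp [Matrix.mul_apply, Fin.sum_univ_two]
  rw [hact, hden, psi_W, Matrix.det_fin_two_of]
  norm_num

theorem mem_Td : embd.toHomUnits ModularGroup.T ∈ modGrp := by
  refine ⟨embd_sp _, fun τ hτ => ?_⟩
  rw [MonoidHom.coe_toHomUnits]
  obtain ⟨t, z, w, rfl⟩ := exists_coords hτ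
  have hden : den (embd ModularGroup.T) !![t, z; z, w] = !![1, 0; -1, 1] := by
    ext i j
    fin_cases i <;> fin_cases j <;>
      simp [den, blkC, blkD, embd, ModularGroup.T, Matrix.mul_apply, Fin.sum_univ_two]
  have hact : act (embd ModularGroup.T) !![t, z; z, w]
      = !![t + 2 * z + w, z + w; z + w, w] := by
    rw [act, hden, inv_of_mul (B := !![1, 0; 1, 1])]
    · ext i j
      fin_cases i <;> fin_cases j <;>
        simp [num, blkA, blkB, embd, ModularGroup.T, Matrix.mul_apply, Fin.sum_univ_two]
      ring
    · ext i j
      fin_cases i <;> fin_cases j <;> simp [Matrix.mul_apply, Fin.sum_univ_two]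
  rw [hact, hden, psi_U, Matrix.det_fin_two_of]
  norm_num

theorem Jmat_sq : Jmat * Jmat = -1 := by decide

theorem sp_unit {M : Matrix (Fin 4) (Fin 4) ℤ} (h : M ∈ Sp4Z) : IsUnit M := by
  have h : Mᵀ * Jmat * M = Jmat := h
  have e : (-Jmat * (Mᵀ * Jmat)) * M = 1 := by
    rw [mul_assoc, h, neg_mul, Jmat_sq, neg_neg]
  exact (Matrix.isUnit_iff_isUnit_det _).2 (Matrix.isUnit_det_of_left_inverse e)

end

/-- `Ψ₁₀ = Π_δ θ[δ]²` is a Siegel modular form of weight 10 for `Sp(4,ℤ)`. -/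
theorem statement12 : ∀ M ∈ Sp4Z, ∀ τ ∈ SiegelH2,
    IsUnit (blkC M * τ + blkD M) ∧
    (blkA M * τ + blkB M) * (blkC M * τ + blkD M)⁻¹ ∈ SiegelH2 ∧
    Ψ10 ((blkA M * τ + blkB M) * (blkC M * τ + blkD M)⁻¹)
      = (blkC M * τ + blkD M).det ^ 10 * Ψ10 τ := by
  intro M hM τ hτ
  refine ⟨den_isUnit hM hτ, act_mem hM hτ, ?_⟩
  obtain ⟨u, rfl⟩ := sp_unit hM
  exact (generate' modGrp mem_S1 mem_T1 mem_Sd mem_Td u hM).2 τ hτ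

end TwoLoop
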